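/- arXiv:math/0303370 — 4 statements merged into one kernel-verified Lean document; each statement's English description precedes it below -/
import Mathlib

section
/- Let A and B be n×n type-II matrices and let R, S be n×n complex matrices. Then the following are equivalent: (a) R·v_{ij} = S_{ij}·v_{ij} for all i,j, where v_{ij} = (Ae_i)∘(Be_j) (i.e. R ∈ N_{A,B} and S = Θ_{A,B}(R)); (b) R·(B∘(A·M)) = B∘(A·(S∘M)) for every n×n matrix M; (c) R·(A∘(B·M)) = A∘(B·(Sᵀ∘M)) for every n×n matrix M; (d) Bᵀ∘((B^(-))ᵀ·((nR)∘M)) = Sᵀ·((A^(-))ᵀ∘(Aᵀ·M)) for every n×n matrix M; (e) (A^(-))ᵀ∘(Aᵀ·((nRᵀ)∘M)) = S·(Bᵀ∘((B^(-))ᵀ·M)) for every n×n matrix M. -/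
open Matrix

variable {m : Type*} [Fintype m] [DecidableEq m]

/-- The Schur (entrywise) inverse `A^(-)` of a matrix: `(A^(-))_{ij} = (A_{ij})⁻¹`. -/
noncomputable def sinv (A : Matrix m m ℂ) : Matrix m m ℂ := Matrix.of fun i j => (A i j)⁻¹

/-- A type-II matrix: a Schur invertible matrix `W` with `W * (W^(-))ᵀ = n • I`,
where `n` is the size of the matrix. -/
def IsTypeII (A : Matrix m m ℂ) : Prop :=
  (∀ i j, A i j ≠ 0) ∧ A * (sinv A)ᵀ = (Fintype.card m : ℂ) • (1 : Matrix m m ℂ)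

/-- `v_{ij} = (A e_i) ∘ (B e_j)`: the entrywise product of column `i` of `A`
with column `j` of `B`. -/
def colProd (A B : Matrix m m ℂ) (i j : m) : m → ℂ := fun k => A k i * B k j

/-- Membership in the Nomura algebra `N_{A,B}`: every `v_{ij}` is an eigenvector of `M`. -/
def InNomura (A B M : Matrix m m ℂ) : Prop :=
  ∀ i j, ∃ c : ℂ, M.mulVec (colProd A B i j) = c • colProd A B i j

/-- `S = Θ_{A,B}(M)`: the matrix of eigenvalues, i.e. `M v_{ij} = S_{ij} v_{ij}` for all `i,j`. -/
def IsTheta (A B M S : Matrix m m ℂ) : Prop :=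
  ∀ i j, M.mulVec (colProd A B i j) = S i j • colProd A B i j

/-- `(A,B)` is a Jones pair: `A` invertible, `B` Schur invertible, and
`X_A Δ_B X_A = Δ_B X_A Δ_B` and `X_A Δ_{Bᵀ} X_A = Δ_{Bᵀ} X_A Δ_{Bᵀ}`
as operators on matrices. -/
def IsJonesPair (A B : Matrix m m ℂ) : Prop :=
  IsUnit A ∧ (∀ i j, B i j ≠ 0) ∧
  (∀ M : Matrix m m ℂ, A * (B ⊙ (A * M)) = B ⊙ (A * (B ⊙ M))) ∧
  (∀ M : Matrix m m ℂ, A * (Bᵀ ⊙ (A * M)) = Bᵀ ⊙ (A * (Bᵀ ⊙ M)))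

/-- An invertible Jones pair: a Jones pair in which moreover `A` is Schur
invertible and `B` is invertible. -/
def IsInvertibleJonesPair (A B : Matrix m m ℂ) : Prop :=
  IsJonesPair A B ∧ (∀ i j, A i j ≠ 0) ∧ IsUnit B

/-- `W` is a spin model: for some `d` with `d² = n`, `(d⁻¹ W, W^(-))` is an
invertible Jones pair. -/
def IsSpinModel (W : Matrix m m ℂ) : Prop :=
  ∃ d : ℂ, d ^ 2 = (Fintype.card m : ℂ) ∧ IsInvertibleJonesPair (d⁻¹ • W) (sinv W)

/-- Given an invertible Jones pair `(A,B)` with `A` symmetric, `K` is paired with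
`H ∈ N_{A,B}` if `Kᵀ ∈ N_{A,Bᵀ}` and `Θ_{A,B}(H) = (Θ_{A,Bᵀ}(Kᵀ))ᵀ`. -/
def Paired (A B H K : Matrix m m ℂ) : Prop :=
  ∃ S : Matrix m m ℂ, IsTheta A B H S ∧ IsTheta A Bᵀ Kᵀ Sᵀ

/-- The `4n × 4n` matrix with `4 × 4` block structure
`[[P, Q, R, R], [Q, P, R, R], [S, S, T, U], [S, S, U, T]]`. -/
def blockMat {n : ℕ} (P Q R S T U : Matrix (Fin n) (Fin n) ℂ) :
    Matrix (Fin 4 × Fin n) (Fin 4 × Fin n) ℂ :=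
  Matrix.of fun x y =>
    (![![P, Q, R, R], ![Q, P, R, R], ![S, S, T, U], ![S, S, U, T]] x.1 y.1) x.2 y.2

/-- Yamada's `4n × 4n` matrix `V` built from `A`, `B` and `d` with `d² = n`. -/
noncomputable def Vmat {n : ℕ} (A B : Matrix (Fin n) (Fin n) ℂ) (d : ℂ) :
    Matrix (Fin 4 × Fin n) (Fin 4 × Fin n) ℂ :=
  blockMat (d • A) (-(d • A)) (sinv B) (sinv B)ᵀ (d • A) (-(d • A))

/-!
Both sides of an operator identity `A (B ∘ (C M)) = Q ∘ (R (S ∘ M))` are linear in `M`, so it says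
that `∑ x, A k x * B x j * C x i = Q k j * R k i * S i j`. The left side is symmetric in `A`, `B`,
`C`, so relabelling the free indices gives equivalent identities: a transposition exchanges (b) with
(c), and a 3-cycle turns (d) into `A (S ∘ ((A^(-))ᵀ M)) = B^(-) ∘ (nR (B ∘ M))`.

To compare this with (b), fix `j` and write `D` and `E` for the diagonal matrices of column `j` of
`B` and of `S`. Both (a) and (b) say `R D A = D A E`: the columns of `A` diagonalise `D⁻¹ R D`.
A type-II matrix `A` has inverse `n⁻¹ (A^(-))ᵀ`, so this is `n D⁻¹ R D = A E (A^(-))ᵀ`, which is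
(d) after the 3-cycle. The same equivalence for `(B, A, Sᵀ)` and another transposition
relate (c) to (e).
-/

section Exchange

variable {α ι κ l p : Type*} [CommSemiring α] [Fintype ι] [Fintype l]
  {A : Matrix p l α} {B : Matrix l κ α} {C : Matrix l ι α}
  {Q : Matrix p κ α} {R : Matrix p ι α} {S : Matrix ι κ α}

theorem mul_hadamard_mul_apply (A : Matrix p l α) (B : Matrix l κ α) (C : Matrix l ι α)
    (M : Matrix ι κ α) (k : p) (j : κ) :
    (A * (B ⊙ (C * M))) k j = (fun i => ∑ x, A k x * B x j * C x i) ⬝ᵥ M.col j := by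
  simp only [mul_apply, hadamard_apply, dotProduct, col_apply, Finset.mul_sum, Finset.sum_mul,
    mul_assoc]
  exact Finset.sum_comm

theorem hadamard_mul_hadamard_apply (Q : Matrix p κ α) (R : Matrix p ι α) (S M : Matrix ι κ α)
    (k : p) (j : κ) :
    (Q ⊙ (R * (S ⊙ M))) k j = (fun i => Q k j * R k i * S i j) ⬝ᵥ M.col j := by
  simp only [mul_apply, hadamard_apply, dotProduct, col_apply, Finset.mul_sum, mul_assoc]

theorem forall_mul_hadamard_mul_eq_iff_sum :
    (∀ M, A * (B ⊙ (C * M)) = Q ⊙ (R * (S ⊙ M))) ↔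
      ∀ j k i, ∑ x, A k x * B x j * C x i = Q k j * R k i * S i j := by
  simp only [← Matrix.ext_iff, mul_hadamard_mul_apply, hadamard_mul_hadamard_apply]
  constructor
  · exact fun h j k => congrFun (dotProduct_eq _ _ fun w => h (of fun i _ => w i) k j)
  · exact fun h M k j => congrArg (· ⬝ᵥ M.col j) (funext (h j k))

theorem forall_mul_hadamard_mul_eq_iff_diagonal [Fintype p] [DecidableEq l] [DecidableEq p]
    [DecidableEq ι] :
    (∀ M, A * (B ⊙ (C * M)) = Q ⊙ (R * (S ⊙ M))) ↔
      ∀ j, A * diagonal (B.col j) * C = diagonal (Q.col j) * R * diagonal (S.col j) := by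
  rw [forall_mul_hadamard_mul_eq_iff_sum]
  simp only [← Matrix.ext_iff, mul_apply (N := C), mul_diagonal, diagonal_mul, col_apply]

theorem forall_mul_hadamard_mul_eq_iff_exchange [Fintype κ] :
    (∀ M, A * (B ⊙ (C * M)) = Q ⊙ (R * (S ⊙ M))) ↔
      ∀ M, A * (C ⊙ (B * M)) = R ⊙ (Q * (Sᵀ ⊙ M)) := by
  simp only [forall_mul_hadamard_mul_eq_iff_sum, transpose_apply, mul_right_comm _ (C _ _),
    mul_comm (R _ _)]
  exact ⟨fun h i k j => h j k i, fun h j k i => h i k j⟩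

theorem forall_mul_hadamard_mul_eq_iff_rotate [Fintype p] :
    (∀ M, A * (B ⊙ (C * M)) = Q ⊙ (R * (S ⊙ M))) ↔
      ∀ M, Bᵀ * (C ⊙ (Aᵀ * M)) = Sᵀ ⊙ (Qᵀ * (R ⊙ M)) := by
  simp only [forall_mul_hadamard_mul_eq_iff_sum, transpose_apply,
    ← mul_rotate (A _ _), mul_rotate (S _ _)]
  exact ⟨fun h i j k => h j k i, fun h j k i => h i j k⟩

end Exchange

theorem isTheta_iff_forall_mul_hadamard_mul_eq {ι : Type*} [Fintype ι] {A B R S : Matrix ι ι ℂ} :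
    IsTheta A B R S ↔ ∀ M : Matrix ι ι ℂ, R * (B ⊙ (A * M)) = B ⊙ (A * (S ⊙ M)) := by
  have eigenvector_iff (i j k) : (R *ᵥ colProd A B i j) k = (S i j • colProd A B i j) k ↔
      ∑ x, R k x * B x j * A x i = B k j * A k i * S i j := by
    simp only [mulVec, dotProduct, colProd, Pi.smul_apply, smul_eq_mul, mul_comm (A _ i),
      ← mul_assoc, mul_rotate (S i j)]
  simp only [IsTheta, funext_iff, eigenvector_iff, forall_mul_hadamard_mul_eq_iff_sum]
  exact ⟨fun h j k i => h i j k, fun h i j k => h j k i⟩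

theorem IsTypeII.transpose_sinv_mul [Nonempty m] {A : Matrix m m ℂ} (hA : IsTypeII A) :
    (sinv A)ᵀ * A = (Fintype.card m : ℂ) • 1 := by
  have hn : (Fintype.card m : ℂ) ≠ 0 := Nat.cast_ne_zero.mpr Fintype.card_ne_zero
  rw [← inv_smul_eq_iff₀ hn, ← smul_mul_assoc]
  apply mul_eq_one_comm.mp
  rw [Matrix.mul_smul, hA.2, inv_smul_smul₀ hn]

theorem IsTypeII.mul_eq_iff [Nonempty m] {A X Y : Matrix m m ℂ} (hA : IsTypeII A) :
    X * A = Y ↔ (Fintype.card m : ℂ) • X = Y * (sinv A)ᵀ := by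
  have hn : (Fintype.card m : ℂ) ≠ 0 := Nat.cast_ne_zero.mpr Fintype.card_ne_zero
  constructor
  · rintro rfl
    rw [mul_assoc, hA.2, Matrix.mul_smul, mul_one]
  · intro h
    rw [← smul_right_inj hn, ← smul_mul_assoc, h, mul_assoc, hA.transpose_sinv_mul,
      Matrix.mul_smul, mul_one]

theorem IsTypeII.mul_diagonal_mul_eq_iff [Nonempty m] {A R : Matrix m m ℂ} {d e : m → ℂ}
    (hA : IsTypeII A) (hd : ∀ i, d i ≠ 0) :
    R * diagonal d * A = diagonal d * A * diagonal e ↔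
      A * diagonal e * (sinv A)ᵀ = diagonal d⁻¹ * ((Fintype.card m : ℂ) • R) * diagonal d := by
  have inv_mul : diagonal d⁻¹ * diagonal d = 1 := by
    simp [funext fun i => inv_mul_cancel₀ (hd i)]
  have mul_inv : diagonal d * diagonal d⁻¹ = 1 := mul_eq_one_comm.mp inv_mul
  rw [hA.mul_eq_iff, ← smul_mul_assoc]
  simp only [mul_assoc]
  constructor <;> intro h
  · rw [h, ← mul_assoc (diagonal d⁻¹), inv_mul, one_mul]
  · rw [h, ← mul_assoc, mul_inv, one_mul]

theorem IsTypeII.forall_mul_hadamard_mul_eq_iff_sinv [Nonempty m] {A B R S : Matrix m m ℂ}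
    (hA : IsTypeII A) (hB : ∀ i j, B i j ≠ 0) :
    (∀ M : Matrix m m ℂ, R * (B ⊙ (A * M)) = B ⊙ (A * (S ⊙ M))) ↔
      ∀ M : Matrix m m ℂ,
        Sᵀ * ((sinv A)ᵀ ⊙ (Aᵀ * M)) = Bᵀ ⊙ ((sinv B)ᵀ * (((Fintype.card m : ℂ) • R) ⊙ M)) :=
  calc
    _ ↔ ∀ j, R * diagonal (B.col j) * A = diagonal (B.col j) * A * diagonal (S.col j) :=
      forall_mul_hadamard_mul_eq_iff_diagonal
    _ ↔ ∀ j, A * diagonal (S.col j) * (sinv A)ᵀ =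
          diagonal ((sinv B).col j) * ((Fintype.card m : ℂ) • R) * diagonal (B.col j) :=
      forall_congr' fun j => hA.mul_diagonal_mul_eq_iff fun i => hB i j
    _ ↔ ∀ M, A * (S ⊙ ((sinv A)ᵀ * M)) = sinv B ⊙ (((Fintype.card m : ℂ) • R) * (B ⊙ M)) :=
      forall_mul_hadamard_mul_eq_iff_diagonal.symm
    _ ↔ _ := forall_mul_hadamard_mul_eq_iff_rotate

theorem theta_equivalences_general [Nonempty m] (A B R S : Matrix m m ℂ)
    (hA : IsTypeII A) (hB : IsTypeII B) :
    List.TFAE [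
      IsTheta A B R S,
      ∀ M : Matrix m m ℂ, R * (B ⊙ (A * M)) = B ⊙ (A * (S ⊙ M)),
      ∀ M : Matrix m m ℂ, R * (A ⊙ (B * M)) = A ⊙ (B * (Sᵀ ⊙ M)),
      ∀ M : Matrix m m ℂ,
        Bᵀ ⊙ ((sinv B)ᵀ * (((Fintype.card m : ℂ) • R) ⊙ M)) = Sᵀ * ((sinv A)ᵀ ⊙ (Aᵀ * M)),
      ∀ M : Matrix m m ℂ,
        (sinv A)ᵀ ⊙ (Aᵀ * (((Fintype.card m : ℂ) • Rᵀ) ⊙ M)) = S * (Bᵀ ⊙ ((sinv B)ᵀ * M))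
    ] := by
  tfae_have 1 ↔ 2 := isTheta_iff_forall_mul_hadamard_mul_eq
  tfae_have 2 ↔ 3 := forall_mul_hadamard_mul_eq_iff_exchange
  tfae_have 2 ↔ 4 :=
    (hA.forall_mul_hadamard_mul_eq_iff_sinv hB.1).trans (forall_congr' fun _ => eq_comm)
  tfae_have 3 ↔ 5 := by
    rw [hB.forall_mul_hadamard_mul_eq_iff_sinv hA.1, forall_mul_hadamard_mul_eq_iff_exchange,
      transpose_transpose, transpose_smul]
    exact forall_congr' fun _ => eq_comm
  tfae_finish

theorem theta_equivalences {n : ℕ} (hn : 0 < n) (A B R S : Matrix (Fin n) (Fin n) ℂ)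
    (hA : IsTypeII A) (hB : IsTypeII B) :
    List.TFAE [
      IsTheta A B R S,
      ∀ M : Matrix (Fin n) (Fin n) ℂ, R * (B ⊙ (A * M)) = B ⊙ (A * (S ⊙ M)),
      ∀ M : Matrix (Fin n) (Fin n) ℂ, R * (A ⊙ (B * M)) = A ⊙ (B * (Sᵀ ⊙ M)),
      ∀ M : Matrix (Fin n) (Fin n) ℂ,
        Bᵀ ⊙ ((sinv B)ᵀ * (((n : ℂ) • R) ⊙ M)) = Sᵀ * ((sinv A)ᵀ ⊙ (Aᵀ * M)),
      ∀ M : Matrix (Fin n) (Fin n) ℂ,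
        (sinv A)ᵀ ⊙ (Aᵀ * (((n : ℂ) • Rᵀ) ⊙ M)) = S * (Bᵀ ⊙ ((sinv B)ᵀ * M))
    ] := by
  have : Nonempty (Fin n) := Fin.pos_iff_nonempty.mp hn
  simpa only [Fintype.card_fin] using theta_equivalences_general A B R S hA hB
end

section
/- Let A be an n×n type-II matrix. Then N_A is a Bose-Mesner algebra: it is a linear subspace of the n×n complex matrices containing the identity matrix I and the all-ones matrix J (with Θ_A(I) = J and Θ_A(J) = nI); it is closed under matrix multiplication, under the Schur product, and under transposition; and matrix multiplication restricted to N_A is commutative (MN = NM for all M, N ∈ N_A). -/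
open Matrix

variable {m : Type*} [Fintype m] [DecidableEq m]

/-!
Fix a type-II matrix `A` of size `n`. For fixed `j` the vectors `v_{ij} = (A e_i) ∘ (A^(-) e_j)`
form a basis, and `A⁻¹ = n⁻¹ (A^(-))ᵀ`, so the eigenvalue equations for `Θ_A(M) = S` can be solved
for `M`: they become `Θ_{Aᵀ}(Sᵀ) = n M`. Thus `Θ` exchanges the matrix and Schur products of `N_A`
and `N_{Aᵀ}`. Applying the duality twice gives `Θ_A(Mᵀ) = Θ_A(M)ᵀ`; transporting products through
it gives `Θ_A(M ∘ N) = n⁻¹ Θ_A(M) Θ_A(N)`; and `N_A` is commutative because `Θ_A` is injective and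
turns matrix products into Schur products.
-/

lemma cast_card_ne_zero (ι : Type*) [Fintype ι] [Nonempty ι] : (Fintype.card ι : ℂ) ≠ 0 :=
  Nat.cast_ne_zero.mpr Fintype.card_ne_zero

section

variable {ι : Type*} {A B M N S T : Matrix ι ι ℂ}

lemma colProd_ne_zero (hA : ∀ i j, A i j ≠ 0) (hB : ∀ i j, B i j ≠ 0) (i j : ι) :
    colProd A B i j ≠ 0 :=
  Function.ne_iff.mpr ⟨i, mul_ne_zero (hA i i) (hB i j)⟩

variable [Fintype ι]

lemma isTheta_iff_sum : IsTheta A B M S ↔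
    ∀ i j k, ∑ l, M k l * (A l i * B l j) = S i j * (A k i * B k j) := by
  simp only [IsTheta, funext_iff]
  rfl

lemma inNomura_iff_exists_isTheta : InNomura A B M ↔ ∃ S, IsTheta A B M S := by
  simp only [InNomura, Classical.skolem]
  rfl

lemma IsTheta.inNomura (hM : IsTheta A B M S) : InNomura A B M :=
  inNomura_iff_exists_isTheta.mpr ⟨S, hM⟩

namespace IsTheta

lemma add (hM : IsTheta A B M S) (hN : IsTheta A B N T) : IsTheta A B (M + N) (S + T) := by
  intro i j
  rw [add_mulVec, hM i j, hN i j, ← add_smul, Matrix.add_apply]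

lemma smul (c : ℂ) (hM : IsTheta A B M S) : IsTheta A B (c • M) (c • S) := by
  intro i j
  rw [smul_mulVec, hM i j, smul_smul, Matrix.smul_apply, smul_eq_mul]

lemma mul (hM : IsTheta A B M S) (hN : IsTheta A B N T) : IsTheta A B (M * N) (S ⊙ T) := by
  intro i j
  rw [← mulVec_mulVec, hN i j, mulVec_smul, hM i j, smul_smul, hadamard_apply, mul_comm]

lemma unique (hAB : ∀ i j, colProd A B i j ≠ 0) (hS : IsTheta A B M S)
    (hT : IsTheta A B M T) : S = T := by
  ext i j
  exact smul_left_injective ℂ (hAB i j) ((hS i j).symm.trans (hT i j))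

end IsTheta

end

section

variable {ι : Type*} [Fintype ι] [DecidableEq ι] {A M N S T : Matrix ι ι ℂ}

lemma isTheta_one (A B : Matrix ι ι ℂ) : IsTheta A B 1 (Matrix.of fun _ _ => (1 : ℂ)) := by
  intro i j
  rw [one_mulVec, of_apply, one_smul]

/-- The Nomura algebra `N_{A,B}` as a subalgebra of the matrix algebra. -/
def nomuraAlgebra (A B : Matrix ι ι ℂ) : Subalgebra ℂ (Matrix ι ι ℂ) where
  carrier := {M | InNomura A B M}
  mul_mem' hM hN := by
    obtain ⟨S, hS⟩ := inNomura_iff_exists_isTheta.mp hM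
    obtain ⟨T, hT⟩ := inNomura_iff_exists_isTheta.mp hN
    exact (hS.mul hT).inNomura
  add_mem' hM hN := by
    obtain ⟨S, hS⟩ := inNomura_iff_exists_isTheta.mp hM
    obtain ⟨T, hT⟩ := inNomura_iff_exists_isTheta.mp hN
    exact (hS.add hT).inNomura
  algebraMap_mem' c := by
    rw [Algebra.algebraMap_eq_smul_one]
    exact ((isTheta_one A B).smul c).inNomura

/-- A Bose-Mesner algebra: a commutative unital matrix algebra that contains the all-ones matrix
and is closed under the Schur product and transposition. -/
structure IsBoseMesner (𝒜 : Subalgebra ℂ (Matrix ι ι ℂ)) : Prop where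
  allOnes_mem : (Matrix.of fun _ _ => (1 : ℂ)) ∈ 𝒜
  hadamard_mem : ∀ M ∈ 𝒜, ∀ N ∈ 𝒜, M ⊙ N ∈ 𝒜
  transpose_mem : ∀ M ∈ 𝒜, Mᵀ ∈ 𝒜
  mul_comm : ∀ M ∈ 𝒜, ∀ N ∈ 𝒜, M * N = N * M

namespace IsTypeII

lemma sum_row_mul_inv (hA : IsTypeII A) (k l : ι) :
    ∑ i, A k i * (A l i)⁻¹ = if k = l then (Fintype.card ι : ℂ) else 0 := by
  simpa [mul_apply, sinv, one_apply] using congr_fun₂ hA.2 k l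

lemma isTheta_dual (hA : IsTypeII A) (hM : IsTheta A (sinv A) M S) :
    IsTheta Aᵀ (sinv Aᵀ) Sᵀ ((Fintype.card ι : ℂ) • M) := by
  have eigen (i j k) : ∑ l, M k l * (A l i * (A l j)⁻¹) = S i j * (A k i * (A k j)⁻¹) :=
    isTheta_iff_sum.mp hM i j k
  refine isTheta_iff_sum.mpr fun k p j => ?_
  change ∑ i, S i j * (A k i * (A p i)⁻¹) =
    (Fintype.card ι : ℂ) * M k p * (A k j * (A p j)⁻¹)
  calc ∑ i, S i j * (A k i * (A p i)⁻¹)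
      = ∑ i, A k j * (S i j * (A k i * (A k j)⁻¹)) * (A p i)⁻¹ :=
        Finset.sum_congr rfl fun i _ => by field_simp [hA.1 k j]
    _ = ∑ i, ∑ l, A k j * (M k l * (A l j)⁻¹) * (A l i * (A p i)⁻¹) := by
        refine Finset.sum_congr rfl fun i _ => ?_
        rw [← eigen, Finset.mul_sum, Finset.sum_mul]
        exact Finset.sum_congr rfl fun l _ => by ring
    _ = ∑ l, A k j * (M k l * (A l j)⁻¹) * ∑ i, A l i * (A p i)⁻¹ := by
        rw [Finset.sum_comm]
        simp only [Finset.mul_sum]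
    _ = A k j * (M k p * (A p j)⁻¹) * Fintype.card ι := by
        simp only [hA.sum_row_mul_inv, mul_ite, mul_zero, Finset.sum_ite_eq', Finset.mem_univ,
          if_true]
    _ = Fintype.card ι * M k p * (A k j * (A p j)⁻¹) := by ring

variable [Nonempty ι]

protected lemma transpose (hA : IsTypeII A) : IsTypeII Aᵀ := by
  have right_inv : A * ((Fintype.card ι : ℂ)⁻¹ • (sinv A)ᵀ) = 1 := by
    rw [Matrix.mul_smul, hA.2, inv_smul_smul₀ (cast_card_ne_zero ι)]
  have left_inv : (sinv A)ᵀ * A = (Fintype.card ι : ℂ) • (1 : Matrix ι ι ℂ) := by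
    rw [← mul_eq_one_comm.mp right_inv, smul_mul, smul_inv_smul₀ (cast_card_ne_zero ι)]
  refine ⟨fun i j => hA.1 j i, ?_⟩
  calc Aᵀ * sinv A = ((sinv A)ᵀ * A)ᵀ := by rw [transpose_mul, transpose_transpose]
    _ = (Fintype.card ι : ℂ) • (1 : Matrix ι ι ℂ) := by
        rw [left_inv, transpose_smul, transpose_one]

lemma isTheta_allOnes (hA : IsTypeII A) :
    IsTheta A (sinv A) (Matrix.of fun _ _ => (1 : ℂ))
      ((Fintype.card ι : ℂ) • (1 : Matrix ι ι ℂ)) := by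
  refine isTheta_iff_sum.mpr fun i j k => ?_
  have sum_col : ∑ l, A l i * sinv A l j = if i = j then (Fintype.card ι : ℂ) else 0 :=
    hA.transpose.sum_row_mul_inv i j
  simp only [of_apply, one_mul, sum_col, Matrix.smul_apply, one_apply, smul_eq_mul]
  split_ifs with hij
  · rw [hij, sinv, of_apply, mul_inv_cancel₀ (hA.1 k j)]
    ring
  · ring

lemma isTheta_transpose (hA : IsTypeII A) (hM : IsTheta A (sinv A) M S) :
    IsTheta A (sinv A) Mᵀ Sᵀ := by
  have double_dual := hA.transpose.isTheta_dual (hA.isTheta_dual hM)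
  simpa only [transpose_transpose, transpose_smul, inv_smul_smul₀ (cast_card_ne_zero ι)]
    using double_dual.smul (Fintype.card ι : ℂ)⁻¹

lemma isTheta_hadamard (hA : IsTypeII A) (hM : IsTheta A (sinv A) M S)
    (hN : IsTheta A (sinv A) N T) :
    IsTheta A (sinv A) (M ⊙ N) ((Fintype.card ι : ℂ)⁻¹ • (S * T)) := by
  have dual_mul := (hA.isTheta_dual (hA.isTheta_transpose hM)).mul
    (hA.isTheta_dual (hA.isTheta_transpose hN))
  have double_dual := (hA.transpose.isTheta_dual dual_mul).smul
    ((Fintype.card ι : ℂ)⁻¹ * (Fintype.card ι : ℂ)⁻¹)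
  have card_ne_zero := cast_card_ne_zero ι
  simp only [transpose_transpose] at double_dual
  convert double_dual using 1
  · ext i j
    simp only [Matrix.smul_apply, transpose_apply, hadamard_apply, smul_eq_mul]
    field_simp
  · rw [smul_smul, inv_mul_cancel_right₀ card_ne_zero]

lemma eq_of_isTheta (hA : IsTypeII A) (hM : IsTheta A (sinv A) M S)
    (hN : IsTheta A (sinv A) N S) : M = N := by
  have colProd_ne := colProd_ne_zero hA.transpose.1 fun i j => inv_ne_zero (hA.transpose.1 i j)
  exact smul_right_injective _ (cast_card_ne_zero ι) <|
    (hA.isTheta_dual hM).unique colProd_ne (hA.isTheta_dual hN)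

end IsTypeII

theorem isBoseMesner_nomuraAlgebra [Nonempty ι] (hA : IsTypeII A) :
    IsBoseMesner (nomuraAlgebra A (sinv A)) where
  allOnes_mem := hA.isTheta_allOnes.inNomura
  hadamard_mem M hM N hN := by
    obtain ⟨S, hS⟩ := inNomura_iff_exists_isTheta.mp hM
    obtain ⟨T, hT⟩ := inNomura_iff_exists_isTheta.mp hN
    exact (hA.isTheta_hadamard hS hT).inNomura
  transpose_mem M hM := by
    obtain ⟨S, hS⟩ := inNomura_iff_exists_isTheta.mp hM
    exact (hA.isTheta_transpose hS).inNomura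
  mul_comm M hM N hN := by
    obtain ⟨S, hS⟩ := inNomura_iff_exists_isTheta.mp hM
    obtain ⟨T, hT⟩ := inNomura_iff_exists_isTheta.mp hN
    exact hA.eq_of_isTheta (hS.mul hT) (hadamard_comm T S ▸ hT.mul hS)

end

theorem nomura_is_bose_mesner_general {ι : Type*} [Fintype ι] [DecidableEq ι] [Nonempty ι]
    {A : Matrix ι ι ℂ} (hA : IsTypeII A) :
    IsBoseMesner (nomuraAlgebra A (sinv A)) ∧
    IsTheta A (sinv A) 1 (Matrix.of fun _ _ => (1 : ℂ)) ∧
    IsTheta A (sinv A) (Matrix.of fun _ _ => (1 : ℂ))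
      ((Fintype.card ι : ℂ) • (1 : Matrix ι ι ℂ)) :=
  ⟨isBoseMesner_nomuraAlgebra hA, isTheta_one A (sinv A), hA.isTheta_allOnes⟩

theorem nomura_is_bose_mesner {n : ℕ} (hn : 0 < n) (A : Matrix (Fin n) (Fin n) ℂ)
    (hA : IsTypeII A) :
    (∀ M N : Matrix (Fin n) (Fin n) ℂ, InNomura A (sinv A) M → InNomura A (sinv A) N →
      InNomura A (sinv A) (M + N)) ∧
    (∀ (c : ℂ) (M : Matrix (Fin n) (Fin n) ℂ), InNomura A (sinv A) M →
      InNomura A (sinv A) (c • M)) ∧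
    InNomura A (sinv A) (1 : Matrix (Fin n) (Fin n) ℂ) ∧
    InNomura A (sinv A) (Matrix.of fun _ _ => (1 : ℂ)) ∧
    IsTheta A (sinv A) (1 : Matrix (Fin n) (Fin n) ℂ) (Matrix.of fun _ _ => (1 : ℂ)) ∧
    IsTheta A (sinv A) (Matrix.of fun _ _ => (1 : ℂ))
      ((n : ℂ) • (1 : Matrix (Fin n) (Fin n) ℂ)) ∧
    (∀ M N : Matrix (Fin n) (Fin n) ℂ, InNomura A (sinv A) M → InNomura A (sinv A) N →
      InNomura A (sinv A) (M * N)) ∧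
    (∀ M N : Matrix (Fin n) (Fin n) ℂ, InNomura A (sinv A) M → InNomura A (sinv A) N →
      InNomura A (sinv A) (M ⊙ N)) ∧
    (∀ M : Matrix (Fin n) (Fin n) ℂ, InNomura A (sinv A) M → InNomura A (sinv A) Mᵀ) ∧
    (∀ M N : Matrix (Fin n) (Fin n) ℂ, InNomura A (sinv A) M → InNomura A (sinv A) N →
      M * N = N * M) := by
  have : Nonempty (Fin n) := Fin.pos_iff_nonempty.mp hn
  obtain ⟨h, h_one, h_allOnes⟩ := nomura_is_bose_mesner_general hA
  rw [Fintype.card_fin] at h_allOnes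
  let 𝒩 := nomuraAlgebra A (sinv A)
  exact ⟨fun _ _ => 𝒩.add_mem, fun c _ hM => 𝒩.smul_mem hM c, 𝒩.one_mem, h.allOnes_mem,
    h_one, h_allOnes, fun _ _ => 𝒩.mul_mem, fun M N hM => h.hadamard_mem M hM N,
    h.transpose_mem, fun M N hM => h.mul_comm M hM N⟩
end

section
/- Let A and B be n×n type-II matrices. If F ∈ N_A, G ∈ N_{A,B} and H ∈ N_B, then F∘G ∈ N_{A,B} and G∘H ∈ N_{A,B}, with Θ_{A,B}(F∘G) = n^{-1}·Θ_A(F)·Θ_{A,B}(G) and Θ_{A,B}(G∘H) = n^{-1}·Θ_{A,B}(G)·Θ_B(H)ᵀ. -/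
open Matrix

variable {m : Type*} [Fintype m] [DecidableEq m]

/-!
For a type-II matrix `A` the matrices `A^(-)` and `n⁻¹ • Aᵀ` are mutually inverse. The vectors
`(A e_i) ∘ (A^(-) e_r)`, `r` varying, are the columns of `Δ_i * A^(-)` with `Δ_i` the diagonal
matrix of the column `A e_i`, so the eigenvector equations for `F ∈ N_A` can be solved for
`F * Δ_i`: each row of `F`, multiplied entrywise by `A e_i`, becomes a combination of columns
`A e_r`. Substituting this into `(F ∘ G) ((A e_i) ∘ (B e_j))` leaves only the products
`G ((A e_r) ∘ (B e_j))`, which are known, and the factors `A^(-)_{kr}` and `A_{kr}` cancel.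
-/

section

variable {ι : Type*} {A B F G H M S SF SG SH : Matrix ι ι ℂ}

theorem colProd_comm (A B : Matrix ι ι ℂ) (i j : ι) : colProd A B i j = colProd B A j i :=
  funext fun _ => mul_comm _ _

variable [Fintype ι]

theorem IsTheta.transpose (h : IsTheta A B M S) : IsTheta B A M Sᵀ := fun i j => by
  simpa only [colProd_comm B A, transpose_apply] using h j i

theorem IsTheta.sum_mul_mul (h : IsTheta A B M S) (i j k : ι) :
    ∑ l, M k l * (A l i * B l j) = S i j * (A k i * B k j) :=
  congrFun (h i j) k

variable [DecidableEq ι]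

theorem IsTheta.mul_diagonal_mul (h : IsTheta A B M S) (i : ι) :
    M * diagonal (A.col i) * B = diagonal (A.col i) * B * diagonal (S i) := by
  ext k j
  rw [mul_apply, mul_diagonal, diagonal_mul, mul_comm]
  simpa only [mul_diagonal, col_apply, mul_assoc] using h.sum_mul_mul i j k

theorem IsTypeII.sinv_mul_transpose (hA : IsTypeII A) :
    sinv A * Aᵀ = (Fintype.card ι : ℂ) • 1 := by
  simpa only [transpose_mul, transpose_transpose, transpose_smul, transpose_one]
    using congrArg Matrix.transpose hA.2

theorem IsTheta.mul_diagonal_eq (hF : IsTheta A (sinv A) F SF) (hA : IsTypeII A) (i : ι) :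
    F * diagonal (A.col i) =
      (Fintype.card ι : ℂ)⁻¹ • (diagonal (A.col i) * sinv A * diagonal (SF i) * Aᵀ) := by
  have : Nonempty ι := ⟨i⟩
  have card_ne_zero : (Fintype.card ι : ℂ) ≠ 0 := Nat.cast_ne_zero.mpr Fintype.card_ne_zero
  rw [eq_inv_smul_iff₀ card_ne_zero]
  calc (Fintype.card ι : ℂ) • (F * diagonal (A.col i))
      = F * diagonal (A.col i) * (sinv A * Aᵀ) := by
        rw [hA.sinv_mul_transpose, mul_smul_comm, mul_one]
    _ = diagonal (A.col i) * sinv A * diagonal (SF i) * Aᵀ := by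
        rw [← mul_assoc, hF.mul_diagonal_mul]

theorem IsTheta.apply_mul_apply_eq (hF : IsTheta A (sinv A) F SF) (hA : IsTypeII A) (i k l : ι) :
    F k l * A l i =
      (Fintype.card ι : ℂ)⁻¹ * ∑ r, A k i * (A k r)⁻¹ * SF i r * A l r := by
  have entry := congrFun₂ (hF.mul_diagonal_eq hA i) k l
  rw [mul_diagonal, Matrix.smul_apply, mul_apply] at entry
  simpa only [mul_diagonal, diagonal_mul, smul_eq_mul, col_apply, transpose_apply, sinv, of_apply]
    using entry

theorem IsTheta.hadamard_left (hG : IsTheta A B G SG) (hA : IsTypeII A)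
    (hF : IsTheta A (sinv A) F SF) :
    IsTheta A B (F ⊙ G) ((Fintype.card ι : ℂ)⁻¹ • (SF * SG)) := by
  intro i j
  ext k
  calc ∑ l, F k l * G k l * (A l i * B l j)
      = ∑ l, F k l * A l i * (G k l * B l j) :=
        Finset.sum_congr rfl fun l _ => by ring
    _ = (Fintype.card ι : ℂ)⁻¹ *
          ∑ r, A k i * (A k r)⁻¹ * SF i r * ∑ l, G k l * (A l r * B l j) := by
        simp only [hF.apply_mul_apply_eq hA, Finset.mul_sum, Finset.sum_mul]
        rw [Finset.sum_comm]
        exact Finset.sum_congr rfl fun r _ => Finset.sum_congr rfl fun l _ => by ring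
    _ = (Fintype.card ι : ℂ)⁻¹ * ∑ r, SF i r * SG r j * (A k i * B k j) := by
        congr! 2 with r
        rw [hG.sum_mul_mul]
        field [hA.1 k r]
    _ = ((Fintype.card ι : ℂ)⁻¹ • (SF * SG)) i j * (A k i * B k j) := by
        rw [Matrix.smul_apply, mul_apply, smul_eq_mul, ← Finset.sum_mul, mul_assoc]

theorem IsTheta.hadamard_right (hG : IsTheta A B G SG) (hB : IsTypeII B)
    (hH : IsTheta B (sinv B) H SH) :
    IsTheta A B (G ⊙ H) ((Fintype.card ι : ℂ)⁻¹ • (SG * SHᵀ)) := by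
  simpa only [transpose_smul, transpose_mul, transpose_transpose, hadamard_comm H G]
    using (hG.transpose.hadamard_left hB hH).transpose

theorem schur_products_in_NAB_general (hA : IsTypeII A) (hB : IsTypeII B)
    (hF : IsTheta A (sinv A) F SF) (hG : IsTheta A B G SG) (hH : IsTheta B (sinv B) H SH) :
    IsTheta A B (F ⊙ G) ((Fintype.card ι : ℂ)⁻¹ • (SF * SG)) ∧
    IsTheta A B (G ⊙ H) ((Fintype.card ι : ℂ)⁻¹ • (SG * SHᵀ)) :=
  ⟨hG.hadamard_left hA hF, hG.hadamard_right hB hH⟩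

end

theorem schur_products_in_NAB {n : ℕ} (hn : 0 < n)
    (A B F G H SF SG SH : Matrix (Fin n) (Fin n) ℂ)
    (hA : IsTypeII A) (hB : IsTypeII B)
    (hF : IsTheta A (sinv A) F SF) (hG : IsTheta A B G SG)
    (hH : IsTheta B (sinv B) H SH) :
    IsTheta A B (F ⊙ G) ((n : ℂ)⁻¹ • (SF * SG)) ∧
    IsTheta A B (G ⊙ H) ((n : ℂ)⁻¹ • (SG * SHᵀ)) := by
  simpa only [Fintype.card_fin] using schur_products_in_NAB_general hA hB hF hG hH
end

section
/- Let A and B be n×n type-II matrices. If F, G ∈ N_{A,B}, then F∘Gᵀ ∈ N_A ∩ N_B, with Θ_A(F∘Gᵀ) = n^{-1}·Θ_{A,B}(F)·Θ_{A,B}(G)ᵀ and Θ_B(F∘Gᵀ) = n^{-1}·Θ_{A,B}(F)ᵀ·Θ_{A,B}(G). -/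
open Matrix

variable {m : Type*} [Fintype m] [DecidableEq m]

/-!
Let `S = Θ_{A,B}(F)` and `T = Θ_{A,B}(G)`, with `i`-th rows `S_i` and `T_i`, and write `Δ_v` for the
diagonal matrix of a vector `v`. For a fixed `i` the equations `F v_{ij} = S_{ij} v_{ij}` say that
`F`, conjugated by the diagonal matrix of the `i`-th column of `A`, is `B Δ_{S_i} B⁻¹`. The `k`-th
entry of `(F ∘ Gᵀ) (A e_i ∘ A^(-) e_j)` is, up to the factor `A_{ki} / A_{kj}`, the `(k, k)` entry
of the product of the conjugates of `F` (by column `i`) and `G` (by column `j`), hence of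
`B Δ_{S_i} Δ_{T_j} B⁻¹`. Since `B` is type II, `B⁻¹` is `n⁻¹` times the transposed Schur inverse of
`B`, so every diagonal entry of `B Δ_d B⁻¹` is the mean of `d`; here that mean is `n⁻¹ (S Tᵀ)_{ij}`.
-/

/-- The conjugate `D⁻¹ M D` of `M` by the diagonal matrix `D` of the `i`-th column of `A`. The
inverse is taken entrywise, so it is a genuine inverse of `D` only if that column has no zeros. -/
noncomputable def colConj (A M : Matrix m m ℂ) (i : m) : Matrix m m ℂ :=
  diagonal (A.col i)⁻¹ * M * diagonal (A.col i)

theorem colConj_apply (A M : Matrix m m ℂ) (i k l : m) :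
    colConj A M i k l = (A k i)⁻¹ * M k l * A l i := by
  simp only [colConj, mul_diagonal, diagonal_mul, Pi.inv_apply, col_apply]

theorem IsTheta.swap {ι : Type*} [Fintype ι] {A B M S : Matrix ι ι ℂ} (hM : IsTheta A B M S) :
    IsTheta B A M Sᵀ := by
  intro i j
  have colProd_swap : colProd B A i j = colProd A B j i := funext fun k => mul_comm _ _
  rw [colProd_swap]
  exact hM j i

theorem IsTheta.semiconjBy_diagonal_colConj {A B M S : Matrix m m ℂ} (hM : IsTheta A B M S) {i : m}
    (hA : ∀ k, A k i ≠ 0) : SemiconjBy B (diagonal (S i)) (colConj A M i) := by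
  ext k j
  have eigen : ∑ l, M k l * (A l i * B l j) = S i j * (A k i * B k j) := congrFun (hM i j) k
  calc (B * diagonal (S i)) k j
      = (A k i)⁻¹ * (S i j * (A k i * B k j)) := by
        rw [mul_diagonal]
        field_simp [hA k]
    _ = ∑ l, (A k i)⁻¹ * (M k l * (A l i * B l j)) := by rw [← eigen, Finset.mul_sum]
    _ = (colConj A M i * B) k j := by
        simp only [mul_apply, colConj_apply, mul_assoc]

theorem IsTypeII.apply_self_of_semiconjBy_diagonal {B M : Matrix m m ℂ} (hB : IsTypeII B)
    {d : m → ℂ} (h : SemiconjBy B (diagonal d) M) (k : m) :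
    M k k = (Fintype.card m : ℂ)⁻¹ * ∑ r, d r := by
  have : Nonempty m := ⟨k⟩
  have card_ne_zero : (Fintype.card m : ℂ) ≠ 0 := Nat.cast_ne_zero.mpr Fintype.card_ne_zero
  have card_smul : (Fintype.card m : ℂ) • M = B * diagonal d * (sinv B)ᵀ := by
    rw [h.eq, Matrix.mul_assoc, hB.2, Matrix.mul_smul, Matrix.mul_one]
  rw [eq_inv_mul_iff_mul_eq₀ card_ne_zero]
  calc (Fintype.card m : ℂ) * M k k
      = (B * diagonal d * (sinv B)ᵀ) k k := congrFun₂ card_smul k k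
    _ = ∑ r, B k r * d r * (B k r)⁻¹ := by
        rw [mul_apply]
        simp only [mul_diagonal, transpose_apply, sinv, of_apply]
    _ = ∑ r, d r := Finset.sum_congr rfl fun r _ => by
        rw [mul_right_comm, mul_inv_cancel₀ (hB.1 k r), one_mul]

theorem hadamard_transpose_mulVec_colProd_sinv {A : Matrix m m ℂ} (F G : Matrix m m ℂ) {i j k : m}
    (hi : A k i ≠ 0) (hj : A k j ≠ 0) :
    ((F ⊙ Gᵀ) *ᵥ colProd A (sinv A) i j) k =
      (colConj A F i * colConj A G j) k k * colProd A (sinv A) i j k := by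
  simp only [mulVec, dotProduct, mul_apply, colConj_apply, hadamard_apply, transpose_apply, colProd,
    sinv, of_apply, Finset.sum_mul]
  refine Finset.sum_congr rfl fun l _ => ?_
  field_simp

theorem IsTheta.hadamard_transpose {A B F G S T : Matrix m m ℂ} (hA : ∀ i j, A i j ≠ 0)
    (hB : IsTypeII B) (hF : IsTheta A B F S) (hG : IsTheta A B G T) :
    IsTheta A (sinv A) (F ⊙ Gᵀ) ((Fintype.card m : ℂ)⁻¹ • (S * Tᵀ)) := by
  intro i j
  ext k
  have semiconj : SemiconjBy B (diagonal fun r => S i r * T j r)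
      (colConj A F i * colConj A G j) := by
    rw [← diagonal_mul_diagonal]
    exact (hF.semiconjBy_diagonal_colConj (hA · i)).mul_right
      (hG.semiconjBy_diagonal_colConj (hA · j))
  rw [hadamard_transpose_mulVec_colProd_sinv F G (hA k i) (hA k j),
    hB.apply_self_of_semiconjBy_diagonal semiconj k]
  rfl

theorem schur_product_transpose_in_NA_NB_general {A B F G S T : Matrix m m ℂ}
    (hA : IsTypeII A) (hB : IsTypeII B) (hF : IsTheta A B F S) (hG : IsTheta A B G T) :
    IsTheta A (sinv A) (F ⊙ Gᵀ) ((Fintype.card m : ℂ)⁻¹ • (S * Tᵀ)) ∧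
    IsTheta B (sinv B) (F ⊙ Gᵀ) ((Fintype.card m : ℂ)⁻¹ • (Sᵀ * T)) :=
  ⟨hF.hadamard_transpose hA.1 hB hG, hF.swap.hadamard_transpose hB.1 hA hG.swap⟩

theorem schur_product_transpose_in_NA_NB {n : ℕ} (hn : 0 < n)
    (A B F G SF SG : Matrix (Fin n) (Fin n) ℂ)
    (hA : IsTypeII A) (hB : IsTypeII B)
    (hF : IsTheta A B F SF) (hG : IsTheta A B G SG) :
    IsTheta A (sinv A) (F ⊙ Gᵀ) ((n : ℂ)⁻¹ • (SF * SGᵀ)) ∧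
    IsTheta B (sinv B) (F ⊙ Gᵀ) ((n : ℂ)⁻¹ • (SFᵀ * SG)) := by
  simpa only [Fintype.card_fin] using schur_product_transpose_in_NA_NB_general hA hB hF hG
end
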